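/- Non-degenerate behaviours are not necessarily non-disturbing. Precisely: let O be a finite set, let X = {a,b,c,d} with contexts C = {a,b,c} and D = {b,c,d}, let p_a, p_b, p_c, p_d be probability distributions on O, and let f, g : O × O → [0,1] be two distinct couplings of the pair (p_b, p_c). Define a behaviour p by p^C(s) = p_a(s(a))·f(s(b), s(c)) for s ∈ O^C and p^D(t) = g(t(b), t(c))·p_d(t(d)) for t ∈ O^D. Then p is a behaviour (each p^C, p^D is a probability distribution), p is non-degenerate (in particular p^C_b = p_b = p^D_b and p^C_c = p_c = p^D_c), and p is disturbing: p^C_{C∩D} = f ≠ g = p^D_{C∩D}. -/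

import Mathlib

def IsDist {α : Type} [Fintype α] (f : α → ℝ) : Prop :=
  (∀ a, 0 ≤ f a) ∧ ∑ a, f a = 1

def coordMarg {O I : Type} [Fintype O] [DecidableEq O] [Fintype I] [DecidableEq I]
    (q : (I → O) → ℝ) (i : I) : O → ℝ :=
  fun o => ∑ v : I → O, if v i = o then q v else 0

def margAlong {O I J : Type} [Fintype O] [DecidableEq O] [Fintype I] [DecidableEq I] [Fintype J]
    (e : J → I) (q : (I → O) → ℝ) : (J → O) → ℝ :=
  fun t => ∑ v : I → O, if ∀ j, v (e j) = t j then q v else 0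

def diagWeight {O J : Type} [Fintype O] [Fintype J] (q : (J → O) → ℝ) : ℝ :=
  ∑ o : O, q (fun _ => o)

def IsCoupling {O J : Type} [Fintype O] [DecidableEq O] [Fintype J] [DecidableEq J]
    (q : (J → O) → ℝ) (r : J → O → ℝ) : Prop :=
  IsDist q ∧ ∀ j : J, coordMarg q j = r j

def IsMaxCoupling {O J : Type} [Fintype O] [DecidableEq O] [Fintype J] [DecidableEq J]
    (q : (J → O) → ℝ) (r : J → O → ℝ) : Prop :=
  IsCoupling q r ∧ ∀ q' : (J → O) → ℝ, IsCoupling q' r → diagWeight q' ≤ diagWeight q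

def marg {X O : Type} [DecidableEq X] [Fintype O] [DecidableEq O] (E E' : Finset X)
    (h : E' ⊆ E) (f : (↥E → O) → ℝ) : (↥E' → O) → ℝ :=
  margAlong (fun x : ↥E' => (⟨x.1, h x.2⟩ : ↥E)) f

def Cx {X : Type} [DecidableEq X] (𝒞 : Finset (Finset X)) (x : X) : Finset (Finset X) :=
  𝒞.filter (fun C => x ∈ C)

abbrev XT {X : Type} [DecidableEq X] (𝒞 : Finset (Finset X)) : Type :=
  {i : X × Finset X // i.2 ∈ 𝒞 ∧ i.1 ∈ i.2}

def eC {X : Type} [DecidableEq X] (𝒞 : Finset (Finset X)) (C : Finset X) (hC : C ∈ 𝒞) :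
    ↥C → XT 𝒞 :=
  fun x => ⟨(x.1, C), hC, x.2⟩

def eT {X : Type} [DecidableEq X] (𝒞 : Finset (Finset X)) (x : X) : ↥(Cx 𝒞 x) → XT 𝒞 :=
  fun C => ⟨(x, C.1), (Finset.mem_filter.mp C.2).1, (Finset.mem_filter.mp C.2).2⟩

def famAt {X O : Type} [DecidableEq X] [Fintype O] [DecidableEq O]
    (𝒞 : Finset (Finset X)) (p : ∀ C : Finset X, (↥C → O) → ℝ) (x : X) :
    ↥(Cx 𝒞 x) → O → ℝ :=
  fun C => coordMarg (p C.1) ⟨x, (Finset.mem_filter.mp C.2).2⟩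

def IsGlobalSection {X O : Type} [Fintype X] [DecidableEq X] [Fintype O] [DecidableEq O]
    (𝒞 : Finset (Finset X)) (p : ∀ C : Finset X, (↥C → O) → ℝ) (q : (X → O) → ℝ) : Prop :=
  IsDist q ∧ ∀ C ∈ 𝒞, p C = margAlong (fun x : ↥C => (x : X)) q

def NonDeg {X O : Type} [DecidableEq X] [Fintype O] [DecidableEq O]
    (𝒞 : Finset (Finset X)) (p : ∀ C : Finset X, (↥C → O) → ℝ) : Prop :=
  ∀ (x : X) (C D : Finset X), C ∈ 𝒞 → D ∈ 𝒞 → ∀ (hxC : x ∈ C) (hxD : x ∈ D),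
    coordMarg (p C) ⟨x, hxC⟩ = coordMarg (p D) ⟨x, hxD⟩

def ExtNC {X O : Type} [Fintype X] [DecidableEq X] [Fintype O] [DecidableEq O]
    (𝒞 : Finset (Finset X)) (p : ∀ C : Finset X, (↥C → O) → ℝ) : Prop :=
  ∃ q : (XT 𝒞 → O) → ℝ,
    IsCoupling q (fun i : XT 𝒞 => coordMarg (p i.1.2) ⟨i.1.1, i.2.2⟩) ∧
    (∀ (C : Finset X) (hC : C ∈ 𝒞), margAlong (eC 𝒞 C hC) q = p C) ∧
    (∀ x : X, IsMaxCoupling (margAlong (eT 𝒞 x) q) (famAt 𝒞 p x))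

open scoped Classical in
noncomputable def trivExt {X O : Type} [Fintype X] [DecidableEq X] [Fintype O] [DecidableEq O]
    (𝒞 : Finset (Finset X)) (q : (X → O) → ℝ) : (XT 𝒞 → O) → ℝ :=
  fun v => if h : ∃ u : X → O, ∀ i : XT 𝒞, v i = u i.1.1 then q h.choose else 0

/-- A coupling of a pair of distributions on `O`, presented as a two-variable function. -/
def IsCoupling2 {O : Type} [Fintype O] (q : O → O → ℝ) (p₁ p₂ : O → ℝ) : Prop :=
  (∀ o o', 0 ≤ q o o') ∧ (∑ o : O, ∑ o' : O, q o o' = 1) ∧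
  (∀ o : O, ∑ o' : O, q o o' = p₁ o) ∧ (∀ o' : O, ∑ o : O, q o o' = p₂ o')

/-- The distribution `p^C(s) = p_a(s(a))·f(s(b), s(c))` on the context `C = {a,b,c}`. -/
def behC {X O : Type} [DecidableEq X] (a b c : X) (pa : O → ℝ) (f : O → O → ℝ) :
    (↥({a, b, c} : Finset X) → O) → ℝ :=
  fun s => pa (s ⟨a, by simp⟩) * f (s ⟨b, by simp⟩) (s ⟨c, by simp⟩)

/-- The distribution `p^D(t) = g(t(b), t(c))·p_d(t(d))` on the context `D = {b,c,d}`. -/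
def behD {X O : Type} [DecidableEq X] (b c d : X) (pd : O → ℝ) (g : O → O → ℝ) :
    (↥({b, c, d} : Finset X) → O) → ℝ :=
  fun t => g (t ⟨b, by simp⟩) (t ⟨c, by simp⟩) * pd (t ⟨d, by simp⟩)

/-!
Each context consists of the overlap `C ∩ D = {b, c}` and one further measurement whose outcome is
drawn independently. Summing out that measurement leaves the chosen coupling on the overlap, so the
two behaviours disagree there exactly when `f ≠ g`; the single-measurement marginals only see the
marginals `p_b`, `p_c` of the coupling, which `f` and `g` share.
-/

section Splitting

variable {O I J : Type*} {i₀ : I} {e : J → I}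

theorem bijective_eval_prod_comp (he : Function.Injective e) (hi₀ : Set.range e = {i₀}ᶜ) :
    Function.Bijective fun v : I → O => (v i₀, v ∘ e) := by
  constructor
  · intro v w h
    obtain ⟨h_eval, h_comp⟩ := Prod.ext_iff.mp h
    funext i
    by_cases hi : i = i₀
    · exact hi ▸ h_eval
    · obtain ⟨j, rfl⟩ : i ∈ Set.range e := by simpa [hi₀] using hi
      exact congrFun h_comp j
  · rintro ⟨o, t⟩
    have hi₀_range : i₀ ∉ Set.range e := by simp [hi₀]
    refine ⟨Function.extend e t fun _ => o, ?_⟩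
    simp only [Function.extend_apply' _ _ _ hi₀_range, Function.extend_comp he]

variable {M : Type*} [AddCommMonoid M] [Fintype O] [Fintype I] [DecidableEq I]
  [Fintype J] [DecidableEq J]

theorem sum_eval_comp (he : Function.Injective e) (hi₀ : Set.range e = {i₀}ᶜ)
    (G : O → (J → O) → M) :
    ∑ v : I → O, G (v i₀) (v ∘ e) = ∑ o, ∑ t, G o t :=
  ((bijective_eval_prod_comp he hi₀).sum_comp fun x => G x.1 x.2).trans
    (Fintype.sum_prod_type _)

theorem sum_eval_eval {b c : J} (hbc : b ≠ c) (hJ : ∀ j, j = b ∨ j = c) (F : O → O → M) :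
    ∑ t : J → O, F (t b) (t c) = ∑ o, ∑ o', F o o' := by
  have h_range : Set.range (fun _ : Unit => c) = {b}ᶜ := by
    ext j
    rcases hJ j with rfl | rfl <;> simp [hbc, hbc.symm]
  calc
    ∑ t : J → O, F (t b) (t c) = ∑ o, ∑ u : Unit → O, F o (u ()) :=
      sum_eval_comp (Function.injective_of_subsingleton _) h_range fun o u => F o (u ())
    _ = ∑ o, ∑ o', F o o' :=
      Fintype.sum_congr _ _ fun o => (Equiv.funUnique Unit O).sum_comp (F o)

end Splitting

section Weights

variable {O I J : Type}

/-- The joint weight of an independent outcome of weight `r` at `i₀` and an assignment of weight `h`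
to the coordinates listed by `e`. It is used with `e` enumerating the coordinates other than `i₀`,
to present a context as the overlap together with one independent measurement. -/
def adjoinIndep (i₀ : I) (e : J → I) (r : O → ℝ) (h : (J → O) → ℝ) : (I → O) → ℝ :=
  fun v => r (v i₀) * h (v ∘ e)

/-- A weight `f` on pairs of outcomes, viewed as a weight on assignments through the outcomes at `b`
and `c`. When `b` and `c` are the only coordinates, this is the form in which a coupling is a
distribution on the overlap of the two contexts. -/
def pairWeight (b c : J) (f : O → O → ℝ) : (J → O) → ℝ :=
  fun t => f (t b) (t c)

theorem pairWeight_injective {b c : J} (hbc : b ≠ c) :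
    Function.Injective (pairWeight b c : (O → O → ℝ) → (J → O) → ℝ) := by
  classical
  intro f g hfg
  funext o o'
  simpa [pairWeight, hbc.symm] using congrFun hfg (Function.update (fun _ => o') b o)

variable [Fintype O] [Fintype I] [DecidableEq I] [Fintype J]

section AdjoinIndep

variable {i₀ : I} {e : J → I} {r : O → ℝ} {h : (J → O) → ℝ}

theorem margAlong_adjoinIndep [DecidableEq O] (he : Function.Injective e)
    (hi₀ : Set.range e = {i₀}ᶜ) (hr : ∑ o, r o = 1) :
    margAlong e (adjoinIndep i₀ e r h) = h := by
  classical
  funext t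
  calc
    ∑ v : I → O, (if ∀ j, v (e j) = t j then r (v i₀) * h (v ∘ e) else 0)
        = ∑ o, ∑ t', if ∀ j, t' j = t j then r o * h t' else 0 :=
      sum_eval_comp he hi₀ fun o t' => if ∀ j, t' j = t j then r o * h t' else 0
    _ = (∑ o, r o) * h t := by simp [← funext_iff, Finset.sum_mul]
    _ = h t := by rw [hr, one_mul]

variable [DecidableEq J]

theorem coordMarg_adjoinIndep [DecidableEq O] (he : Function.Injective e)
    (hi₀ : Set.range e = {i₀}ᶜ) (hh : ∑ t, h t = 1) :
    coordMarg (adjoinIndep i₀ e r h) i₀ = r := by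
  funext o
  calc
    ∑ v : I → O, (if v i₀ = o then r (v i₀) * h (v ∘ e) else 0)
        = ∑ o', ∑ t, if o' = o then r o' * h t else 0 :=
      sum_eval_comp he hi₀ fun o' t => if o' = o then r o' * h t else 0
    _ = r o * ∑ t, h t := by simp [Finset.sum_ite_irrel, Finset.mul_sum]
    _ = r o := by rw [hh, mul_one]

theorem IsDist.adjoinIndep (he : Function.Injective e) (hi₀ : Set.range e = {i₀}ᶜ)
    (hr : IsDist r) (hh : IsDist h) : IsDist (adjoinIndep i₀ e r h) := by
  refine ⟨fun v => mul_nonneg (hr.1 _) (hh.1 _), ?_⟩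
  calc
    ∑ v : I → O, r (v i₀) * h (v ∘ e) = ∑ o, ∑ t, r o * h t :=
      sum_eval_comp he hi₀ fun o t => r o * h t
    _ = (∑ o, r o) * ∑ t, h t := (Fintype.sum_mul_sum _ _).symm
    _ = 1 := by rw [hr.2, hh.2, mul_one]

end AdjoinIndep

namespace IsCoupling2

variable [DecidableEq J] {b c : J} {f : O → O → ℝ} {p₁ p₂ : O → ℝ}

theorem isDist_pairWeight (hf : IsCoupling2 f p₁ p₂) (hbc : b ≠ c) (hJ : ∀ j, j = b ∨ j = c) :
    IsDist (pairWeight b c f) :=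
  ⟨fun _ => hf.1 _ _, (sum_eval_eval hbc hJ f).trans hf.2.1⟩

theorem coordMarg_pairWeight_left [DecidableEq O] (hf : IsCoupling2 f p₁ p₂) (hbc : b ≠ c)
    (hJ : ∀ j, j = b ∨ j = c) : coordMarg (pairWeight b c f) b = p₁ := by
  funext o
  calc
    ∑ t : J → O, (if t b = o then f (t b) (t c) else 0)
        = ∑ o₁, ∑ o₂, if o₁ = o then f o₁ o₂ else 0 :=
      sum_eval_eval hbc hJ fun o₁ o₂ => if o₁ = o then f o₁ o₂ else 0
    _ = ∑ o₂, f o o₂ := by simp [Finset.sum_ite_irrel]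
    _ = p₁ o := hf.2.2.1 o

theorem coordMarg_pairWeight_right [DecidableEq O] (hf : IsCoupling2 f p₁ p₂) (hbc : b ≠ c)
    (hJ : ∀ j, j = b ∨ j = c) : coordMarg (pairWeight b c f) c = p₂ := by
  funext o
  calc
    ∑ t : J → O, (if t c = o then f (t b) (t c) else 0)
        = ∑ o₁, ∑ o₂, if o₂ = o then f o₁ o₂ else 0 :=
      sum_eval_eval hbc hJ fun o₁ o₂ => if o₂ = o then f o₁ o₂ else 0
    _ = ∑ o₁, f o₁ o := by simp
    _ = p₂ o := hf.2.2.2 o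

end IsCoupling2

theorem coordMarg_margAlong [DecidableEq O] [DecidableEq J] (e : J → I) (q : (I → O) → ℝ) (j : J) :
    coordMarg (margAlong e q) j = coordMarg q (e j) := by
  funext o
  calc
    coordMarg (margAlong e q) j o
        = ∑ t : J → O, ∑ v : I → O, if v ∘ e = t then if t j = o then q v else 0 else 0 := by
      refine Fintype.sum_congr _ _ fun t => ?_
      by_cases ht : t j = o <;> simp [ht, margAlong, funext_iff]
    _ = ∑ v : I → O, if v (e j) = o then q v else 0 := by
      rw [Finset.sum_comm]
      simp

end Weights

section Contexts

variable {X O : Type}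

theorem injective_subtype_of_subset {E F : Finset X} (hEF : E ⊆ F) :
    Function.Injective fun y : ↥E => (⟨y, hEF y.2⟩ : ↥F) :=
  Subtype.map_injective hEF Function.injective_id

variable [DecidableEq X]

theorem range_subtype_of_eq_erase {E F : Finset X} {x : ↥F} (hE : E = F.erase x) (hEF : E ⊆ F) :
    Set.range (fun y : ↥E => (⟨y, hEF y.2⟩ : ↥F)) = {x}ᶜ := by
  ext y
  have h_mem : (y : X) ∈ E ↔ y ≠ x := by simp [hE]
  rw [Set.mem_compl_singleton_iff, ← h_mem]
  exact ⟨fun ⟨z, hz⟩ => hz ▸ z.2, fun hy => ⟨⟨y, hy⟩, rfl⟩⟩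

theorem behC_eq_adjoinIndep {a b c : X} {E : Finset X} (hb : b ∈ E) (hc : c ∈ E)
    (hE : E ⊆ {a, b, c}) (r : O → ℝ) (f : O → O → ℝ) :
    behC a b c r f = adjoinIndep ⟨a, by simp⟩ (fun y : ↥E => ⟨y, hE y.2⟩) r
      (pairWeight ⟨b, hb⟩ ⟨c, hc⟩ f) :=
  rfl

theorem behD_eq_adjoinIndep {b c d : X} {E : Finset X} (hb : b ∈ E) (hc : c ∈ E)
    (hE : E ⊆ {b, c, d}) (r : O → ℝ) (g : O → O → ℝ) :
    behD b c d r g = adjoinIndep ⟨d, by simp⟩ (fun y : ↥E => ⟨y, hE y.2⟩) r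
      (pairWeight ⟨b, hb⟩ ⟨c, hc⟩ g) :=
  funext fun _ => mul_comm _ _

variable [Fintype O] [DecidableEq O] {E F : Finset X}

theorem coordMarg_marg (hEF : E ⊆ F) (q : (↥F → O) → ℝ) (y : ↥E) :
    coordMarg (marg F E hEF q) y = coordMarg q ⟨y, hEF y.2⟩ :=
  coordMarg_margAlong _ q y

theorem marginals_of_eq_adjoinIndep_pairWeight {x : ↥F} {b c : ↥E} (hE : E = F.erase x)
    (hEF : E ⊆ F) (hbc : b ≠ c) (h_cover : ∀ y, y = b ∨ y = c) {r p₁ p₂ : O → ℝ}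
    {f : O → O → ℝ} (hr : IsDist r) (hf : IsCoupling2 f p₁ p₂) {q : (↥F → O) → ℝ}
    (hq : q = adjoinIndep x (fun y : ↥E => ⟨y, hEF y.2⟩) r (pairWeight b c f)) :
    IsDist q ∧ coordMarg q x = r ∧ coordMarg q ⟨b, hEF b.2⟩ = p₁ ∧
      coordMarg q ⟨c, hEF c.2⟩ = p₂ ∧ marg F E hEF q = pairWeight b c f := by
  have h_inj := injective_subtype_of_subset hEF
  have h_range := range_subtype_of_eq_erase hE hEF
  have h_dist := hf.isDist_pairWeight hbc h_cover
  have h_marg : marg F E hEF q = pairWeight b c f :=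
    hq ▸ margAlong_adjoinIndep h_inj h_range hr.2
  refine ⟨hq ▸ hr.adjoinIndep h_inj h_range h_dist,
    hq ▸ coordMarg_adjoinIndep h_inj h_range h_dist.2, ?_, ?_, h_marg⟩
  · rw [← coordMarg_marg, h_marg, hf.coordMarg_pairWeight_left hbc h_cover]
  · rw [← coordMarg_marg, h_marg, hf.coordMarg_pairWeight_right hbc h_cover]

end Contexts

/-- Non-degenerate behaviours need not be non-disturbing. With
`X = {a,b,c,d}`, contexts `C = {a,b,c}`, `D = {b,c,d}`, distributions
`p_a, p_b, p_c, p_d` on `O` and two distinct couplings `f ≠ g` of `(p_b, p_c)`,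
the behaviour `p^C(s) = p_a(s(a))·f(s(b),s(c))`, `p^D(t) = g(t(b),t(c))·p_d(t(d))`
is a behaviour, is non-degenerate (`p^C_b = p_b = p^D_b`, `p^C_c = p_c = p^D_c`,
`p^C_a = p_a`, `p^D_d = p_d`), but is disturbing: `p^C_{C∩D} = f ≠ g = p^D_{C∩D}`. -/
theorem nonDegenerate_not_nonDisturbing
    {X O : Type} [DecidableEq X] [Fintype O] [DecidableEq O]
    (a b c d : X) (hab : a ≠ b) (hac : a ≠ c) (had : a ≠ d)
    (hbc : b ≠ c) (hbd : b ≠ d) (hcd : c ≠ d)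
    (pa pb pc pd : O → ℝ)
    (hpa : IsDist pa) (hpb : IsDist pb) (hpc : IsDist pc) (hpd : IsDist pd)
    (f g : O → O → ℝ)
    (hf : IsCoupling2 f pb pc) (hg : IsCoupling2 g pb pc) (hfg : f ≠ g) :
    -- p is a behaviour:
    (IsDist (behC a b c pa f) ∧ IsDist (behD b c d pd g)) ∧
    -- p is non-degenerate:
    (coordMarg (behC a b c pa f) ⟨a, by simp⟩ = pa ∧
     coordMarg (behC a b c pa f) ⟨b, by simp⟩ = pb ∧
     coordMarg (behC a b c pa f) ⟨c, by simp⟩ = pc ∧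
     coordMarg (behD b c d pd g) ⟨b, by simp⟩ = pb ∧
     coordMarg (behD b c d pd g) ⟨c, by simp⟩ = pc ∧
     coordMarg (behD b c d pd g) ⟨d, by simp⟩ = pd) ∧
    -- the marginal of p^C on C ∩ D is f, that of p^D is g:
    (∀ t : ↥(({a, b, c} : Finset X) ∩ ({b, c, d} : Finset X)) → O,
      marg {a, b, c} (({a, b, c} : Finset X) ∩ ({b, c, d} : Finset X))
          Finset.inter_subset_left (behC a b c pa f) t
        = f (t ⟨b, by simp⟩) (t ⟨c, by simp⟩)) ∧
    (∀ t : ↥(({a, b, c} : Finset X) ∩ ({b, c, d} : Finset X)) → O,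
      marg {b, c, d} (({a, b, c} : Finset X) ∩ ({b, c, d} : Finset X))
          Finset.inter_subset_right (behD b c d pd g) t
        = g (t ⟨b, by simp⟩) (t ⟨c, by simp⟩)) ∧
    -- hence p is disturbing:
    marg {a, b, c} (({a, b, c} : Finset X) ∩ ({b, c, d} : Finset X))
        Finset.inter_subset_left (behC a b c pa f)
      ≠ marg {b, c, d} (({a, b, c} : Finset X) ∩ ({b, c, d} : Finset X))
        Finset.inter_subset_right (behD b c d pd g) := by
  have h_left : ({a, b, c} : Finset X) ∩ {b, c, d} = ({a, b, c} : Finset X).erase a := by grind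
  have h_right : ({a, b, c} : Finset X) ∩ {b, c, d} = ({b, c, d} : Finset X).erase d := by grind
  have h_ne : (⟨b, by simp⟩ : ↥(({a, b, c} : Finset X) ∩ {b, c, d})) ≠ ⟨c, by simp⟩ := by
    simpa using hbc
  have h_cover : ∀ y : ↥(({a, b, c} : Finset X) ∩ {b, c, d}),
      y = ⟨b, by simp⟩ ∨ y = ⟨c, by simp⟩ := by grind
  obtain ⟨h_distC, hCa, hCb, hCc, h_margC⟩ :=
    marginals_of_eq_adjoinIndep_pairWeight h_left Finset.inter_subset_left h_ne h_cover hpa hf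
      (behC_eq_adjoinIndep _ _ _ pa f)
  obtain ⟨h_distD, hDd, hDb, hDc, h_margD⟩ :=
    marginals_of_eq_adjoinIndep_pairWeight h_right Finset.inter_subset_right h_ne h_cover hpd hg
      (behD_eq_adjoinIndep _ _ _ pd g)
  refine ⟨⟨h_distC, h_distD⟩, ⟨hCa, hCb, hCc, hDb, hDc, hDd⟩, congrFun h_margC,
    congrFun h_margD, ?_⟩
  rw [h_margC, h_margD]
  exact (pairWeight_injective h_ne).ne hfg
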